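/- Let i ≤ k be positive integers, A : 𝓢(ℝ^i) → 𝓢'(ℝ^i) continuous linear, ℓ : {1,…,i} → {1,…,k} injective, and let E : 𝓢(ℝ^k) → 𝓢'(ℝ^k) be the unique continuous linear map satisfying E(f₁⊗⋯⊗f_k)(g₁⊗⋯⊗g_k) = A(f_{ℓ(1)}⊗⋯⊗f_{ℓ(i)})(g_{ℓ(1)}⊗⋯⊗g_{ℓ(i)}) · ∏_{m ∉ range(ℓ)} ∫ f_m g_m for all f₁,…,f_k,g₁,…,g_k ∈ 𝓢(ℝ). If A is skew-adjoint (A* = −A), then E is skew-adjoint; if A is self-adjoint (A* = A), then E is self-adjoint. -/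

import Mathlib

/-!
On pure tensors the claim is a computation: with `A g (conj f) = σ * conj (A f (conj g))`, where
`σ = -1` or `σ = 1`, the defining identity of the extension gives the same relation for `E` on
tensors, because `∫ g_m * conj f_m` is the conjugate of `∫ f_m * conj g_m`
(`extension_adjoint_tensor`). For fixed `f` (or fixed `g`) both sides are continuous and additive,
and homogeneous of the same (anti)linear type, so the relation holds on a closed subspace. It
therefore suffices to know that the linear span of the pure tensors is dense in `𝓢(ℝ^k)`
(`tensorClosure_eq_top`). Only tensors with compactly supported factors are used, since for these
the product function is plainly Schwartz.

Density is proved by Fourier series. If `F` is supported in the cube `|x_i| ≤ 1 / 4`, its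
`ℤ^k`-periodization is continuous, and its Fourier coefficients `c_n` are the values of the Fourier
transform of `F` at the lattice points, hence decay rapidly (`fourier_expansion`). Multiplying
the series by a tensor cutoff equal to `1` on the support of `F` writes `F` as a series of tensors
`c_n • U_n`. The Schwartz seminorms of `U_n` grow at most polynomially in `n`, so the series
converges in the Schwartz topology (`mem_of_support_cube`). A general `f` is the limit of
`X (x / R) * f x` as `R → ∞`, with `X` a tensor cutoff; after a dilation, which preserves tensors,
these functions are supported in the cube.
-/

open MeasureTheory SchwartzMap

/-- Distribution-valued operators on `ℝ^n`: continuous linear maps `𝓢(ℝ^n) → 𝓢'(ℝ^n)`. -/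
abbrev DVO (n : ℕ) : Type :=
  SchwartzMap (Fin n → ℝ) ℂ →L[ℂ] (SchwartzMap (Fin n → ℝ) ℂ →L[ℂ] ℂ)

/-- `F ∈ 𝓢(ℝ^n)` is the pure tensor `f₁ ⊗ ⋯ ⊗ f_n` of the one-dimensional Schwartz functions
`f₁, …, f_n`. -/
def IsTensor {n : ℕ} (f : Fin n → SchwartzMap ℝ ℂ) (F : SchwartzMap (Fin n → ℝ) ℂ) : Prop :=
  ∀ x : Fin n → ℝ, F x = ∏ m, f m (x m)

/-- `fc` is the complex conjugate of the Schwartz function `f`. -/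
def IsConjOf {n : ℕ} (f fc : SchwartzMap (Fin n → ℝ) ℂ) : Prop :=
  ∀ x, fc x = (starRingEnd ℂ) (f x)

/-- `A : 𝓢(ℝ^n) → 𝓢'(ℝ^n)` is skew-adjoint (`A* = −A`), where the adjoint is characterized by
`(A* g)(conj f) = conj ((A f)(conj g))`; equivalently
`(A g)(conj f) = − conj ((A f)(conj g))` for all `f, g`. -/
def IsSkewAdjointDVO {n : ℕ} (A : DVO n) : Prop :=
  ∀ f g fc gc : SchwartzMap (Fin n → ℝ) ℂ, IsConjOf f fc → IsConjOf g gc →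
    A g fc = - (starRingEnd ℂ) (A f gc)

/-- `A : 𝓢(ℝ^n) → 𝓢'(ℝ^n)` is self-adjoint (`A* = A`): `(A g)(conj f) = conj ((A f)(conj g))`
for all `f, g`. -/
def IsSelfAdjointDVO {n : ℕ} (A : DVO n) : Prop :=
  ∀ f g fc gc : SchwartzMap (Fin n → ℝ) ℂ, IsConjOf f fc → IsConjOf g gc →
    A g fc = (starRingEnd ℂ) (A f gc)

/-- `E` is the `k`-particle extension `A_{(ℓ(1),…,ℓ(i))}` of the `i`-particle operator `A`. -/
def IsExtension (i k : ℕ) (A : DVO i) (ℓ : Fin i → Fin k) (E : DVO k) : Prop :=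
  ∀ (f g : Fin k → SchwartzMap ℝ ℂ)
    (F G : SchwartzMap (Fin k → ℝ) ℂ) (F' G' : SchwartzMap (Fin i → ℝ) ℂ),
    IsTensor f F → IsTensor g G →
    IsTensor (fun a => f (ℓ a)) F' → IsTensor (fun a => g (ℓ a)) G' →
    E F G = A F' G' * ∏ m ∈ Finset.univ \ Finset.image ℓ Finset.univ, ∫ x : ℝ, f m x * g m x

open Filter Topology FourierTransform
open scoped ContDiff

/-! ### Series and tensors in Schwartz space -/

/-- A series of Schwartz functions all of whose seminorms are summable converges in the Schwartz
topology to its pointwise sum, provided that sum is given as a Schwartz function. -/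
theorem hasSum_schwartz {ι : Type*} {n : ℕ} (u : ι → SchwartzMap (Fin n → ℝ) ℂ)
    (f : SchwartzMap (Fin n → ℝ) ℂ)
    (hu : ∀ p l : ℕ, Summable fun j => SchwartzMap.seminorm ℂ p l (u j))
    (hf : ∀ x, f x = ∑' j, u j x) : HasSum u f := by
  classical
  have hder : ∀ (l : ℕ) x, iteratedFDeriv ℝ l f x = ∑' j, iteratedFDeriv ℝ l (u j) x := by
    intro l x
    have hfe : (f : (Fin n → ℝ) → ℂ) = fun y => ∑' j, u j y := funext hf
    rw [hfe]
    exact iteratedFDeriv_tsum_apply (N := (⊤ : ℕ∞)) (v := fun l j => SchwartzMap.seminorm ℂ 0 l (u j))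
      (fun j => (u j).smooth ⊤) (fun l _ => hu 0 l)
      (fun l j x _ => SchwartzMap.norm_iteratedFDeriv_le_seminorm ℂ (u j) l x) le_top x
  have hsum : ∀ (l : ℕ) x, Summable fun j => iteratedFDeriv ℝ l (u j) x := fun l x =>
    Summable.of_norm_bounded (hu 0 l) fun j => SchwartzMap.norm_iteratedFDeriv_le_seminorm ℂ (u j) l x
  -- The error of a partial sum is bounded by the tail of the series of seminorms.
  have key : ∀ (p l : ℕ) (s : Finset ι), SchwartzMap.seminorm ℂ p l (∑ j ∈ s, u j - f) ≤
      ∑' j : {j // j ∉ s}, SchwartzMap.seminorm ℂ p l (u j) := by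
    intro p l s
    refine SchwartzMap.seminorm_le_bound ℂ p l _ (tsum_nonneg fun j => apply_nonneg _ _) fun x => ?_
    have hs : ∀ t : Finset ι, iteratedFDeriv ℝ l (⇑(∑ j ∈ t, u j)) x
        = ∑ j ∈ t, iteratedFDeriv ℝ l (u j) x := by
      intro t
      have : (⇑(∑ j ∈ t, u j) : (Fin n → ℝ) → ℂ) = fun y => ∑ j ∈ t, u j y := by
        ext y; simp
      rw [this, iteratedFDeriv_sum fun j _ => (u j).smooth l]
      simp
    have hsub : iteratedFDeriv ℝ l (⇑(∑ j ∈ s, u j - f)) x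
        = - ∑' j : {j // j ∉ s}, iteratedFDeriv ℝ l (u j) x := by
      have : (⇑(∑ j ∈ s, u j - f) : (Fin n → ℝ) → ℂ) = ⇑(∑ j ∈ s, u j) - ⇑f := by
        ext y; simp
      rw [this, iteratedFDeriv_sub ((SchwartzMap.smooth _ l)) (f.smooth l), Pi.sub_apply, hs, hder,
        ← (hsum l x).sum_add_tsum_subtype_compl s]
      simp
    rw [hsub, norm_neg]
    have hb : Summable fun j : {j // j ∉ s} => ‖iteratedFDeriv ℝ l (u j) x‖ :=
      Summable.of_nonneg_of_le (fun _ => norm_nonneg _)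
        (fun j : {j // j ∉ s} => SchwartzMap.norm_iteratedFDeriv_le_seminorm ℂ (u j) l x)
        ((hu 0 l).subtype _)
    calc ‖x‖ ^ p * ‖∑' j : {j // j ∉ s}, iteratedFDeriv ℝ l (u j) x‖
        ≤ ‖x‖ ^ p * ∑' j : {j // j ∉ s}, ‖iteratedFDeriv ℝ l (u j) x‖ := by
          gcongr; exact norm_tsum_le_tsum_norm hb
      _ = ∑' j : {j // j ∉ s}, ‖x‖ ^ p * ‖iteratedFDeriv ℝ l (u j) x‖ := tsum_mul_left.symm
      _ ≤ _ := (hb.mul_left _).tsum_le_tsum (fun j => SchwartzMap.le_seminorm ℂ p l _ x)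
          ((hu p l).subtype _)
  rw [HasSum, SummationFilter.unconditional_filter,
    (schwartz_withSeminorms ℂ (Fin n → ℝ) ℂ).tendsto_nhds]
  rintro ⟨p, l⟩ ε hε
  have := tendsto_tsum_compl_atTop_zero fun j => SchwartzMap.seminorm ℂ p l (u j)
  filter_upwards [(tendsto_order.1 this).2 ε hε] with s hs
  exact (key p l s).trans_lt hs

theorem hasCompactSupport_prod {n : ℕ} {f : Fin n → ℝ → ℂ} (hf : ∀ m, HasCompactSupport (f m)) :
    HasCompactSupport fun x : Fin n → ℝ => ∏ m, f m (x m) := by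
  refine HasCompactSupport.intro (K := Set.univ.pi fun m => tsupport (f m))
    (isCompact_univ_pi fun m => hf m) fun x hx => ?_
  simp only [Set.mem_pi, Set.mem_univ, true_imp_iff, not_forall] at hx
  obtain ⟨m, hm⟩ := hx
  exact Finset.prod_eq_zero (Finset.mem_univ m) (image_eq_zero_of_notMem_tsupport hm)

theorem exists_tensor {n : ℕ} (f : Fin n → SchwartzMap ℝ ℂ) (hf : ∀ m, HasCompactSupport (f m)) :
    ∃ F, IsTensor f F :=
  ⟨(hasCompactSupport_prod hf).toSchwartzMap
    (contDiff_prod fun m _ => ((f m).smooth ⊤).comp (contDiff_apply ℝ ℝ m)), fun _ => rfl⟩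

/-- Some negative power of `1 + ‖n‖` is summable over `ℤ^k`. -/
theorem summable_lattice (k : ℕ) : ∃ N : ℕ, Summable fun n : Fin k → ℤ =>
    ((1 + ‖fun j => (n j : ℝ)‖) ^ N)⁻¹ := by
  let b := Pi.basisFun ℝ (Fin k)
  let L := Submodule.span ℤ (Set.range b)
  let N := Module.finrank ℤ L + 1
  have h := ZLattice.summable_norm_pow_inv L N (Nat.lt_succ_self _)
  let φ : (Fin k → ℤ) → L := fun n => ⟨fun j => (n j : ℝ), by
    have : (fun j => (n j : ℝ)) = ∑ j, n j • b j := by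
      ext j; simp [b, Finset.sum_apply, Pi.single_apply]
    rw [this]
    exact Submodule.sum_mem _ fun j _ => Submodule.smul_mem _ _ (Submodule.subset_span ⟨j, rfl⟩)⟩
  have hφ : Function.Injective φ := by
    intro m n h
    ext j
    have := congrFun (congrArg Subtype.val h) j
    simpa [φ] using this
  refine ⟨N, Summable.of_norm_bounded_eventually (h.comp_injective hφ) ?_⟩
  have : {(0 : Fin k → ℤ)}ᶜ ∈ (cofinite : Filter (Fin k → ℤ)) := by simp
  filter_upwards [this] with n hn
  have hpos : 0 < ‖fun j => (n j : ℝ)‖ := by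
    rw [norm_pos_iff]
    intro h0
    apply hn
    ext j
    simpa using congrFun h0 j
  have : ‖φ n‖ = ‖fun j => (n j : ℝ)‖ := rfl
  simp only [Function.comp, this]
  rw [Real.norm_of_nonneg (by positivity), inv_pow]
  gcongr
  simp

/-! ### Fourier series of functions supported in a cube -/

/-- The `ℤ^k`-periodic function on the torus that agrees with `F` on the cube `(-1/2, 1/2]^k`,
for `F` supported in `[-1/4, 1/4]^k`; the support condition makes it continuous across the cuts. -/
noncomputable def periodization {k : ℕ} (F : SchwartzMap (Fin k → ℝ) ℂ)
    (hF : ∀ x i, 1 / 4 < |x i| → F x = 0) : C(UnitAddTorus (Fin k), ℂ) where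
  toFun t := F fun i => (AddCircle.equivIoc (1 : ℝ) (-1 / 2) (t i)).1
  continuous_toFun := by
    rw [continuous_iff_continuousAt]
    intro t
    by_cases h : ∀ i, t i ≠ ((-1 / 2 : ℝ) : AddCircle (1 : ℝ))
    · refine F.continuous.continuousAt.comp (continuousAt_pi.2 fun i => ?_)
      exact continuous_subtype_val.continuousAt.comp
        (ContinuousAt.comp (f := fun t : UnitAddTorus (Fin k) => t i) (x := t)
          (AddCircle.continuousAt_equivIoc (1 : ℝ) (-1 / 2) (h i))
          (continuous_apply i).continuousAt)
    · push Not at h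
      obtain ⟨i, hi⟩ := h
      -- Near the cut the `i`-th coordinate has absolute value above `1 / 4`, where `F` vanishes.
      have hnorm : ∀ s : AddCircle (1 : ℝ),
          ‖s‖ = |(AddCircle.equivIoc (1 : ℝ) (-1 / 2) s).1| := by
        intro s
        have hs := (AddCircle.equivIoc (1 : ℝ) (-1 / 2) s).2
        conv_lhs => rw [← AddCircle.coe_equivIoc (p := (1 : ℝ)) (a := -1 / 2) (y := s)]
        rw [AddCircle.norm_coe_eq_abs_iff 1 one_ne_zero, abs_one, abs_le]
        exact ⟨by linarith [hs.1], by linarith [hs.2]⟩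
      have hti : 1 / 4 < ‖t i‖ := by
        rw [hi, (AddCircle.norm_coe_eq_abs_iff 1 one_ne_zero).2 (by norm_num [abs_div])]
        norm_num [abs_div]
      have hev : ∀ᶠ s in 𝓝 t, 1 / 4 < ‖s i‖ :=
        ((continuous_apply i).norm.tendsto t).eventually (lt_mem_nhds hti)
      refine (continuousAt_const (y := (0 : ℂ))).congr ?_
      filter_upwards [hev] with s hs
      rw [hnorm] at hs
      exact (hF _ i hs).symm

theorem periodization_coe {k : ℕ} (F : SchwartzMap (Fin k → ℝ) ℂ)
    (hF : ∀ x i, 1 / 4 < |x i| → F x = 0) (x : Fin k → ℝ)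
    (hx : ∀ i, x i ∈ Set.Ioc (-1 / 2 : ℝ) (-1 / 2 + 1)) :
    periodization F hF (fun i => (x i : UnitAddCircle)) = F x := by
  change F _ = F _
  congr 1
  ext i
  exact AddCircle.equivIoc_coe_of_mem (p := (1 : ℝ)) (a := -1 / 2) (hx i)

theorem mFourier_coe {k : ℕ} (n : Fin k → ℤ) (x : Fin k → ℝ) :
    UnitAddTorus.mFourier n (fun i => (x i : UnitAddCircle)) =
      ∏ i, Complex.exp (2 * Real.pi * Complex.I * n i * x i) := by
  simp only [UnitAddTorus.mFourier, ContinuousMap.coe_mk]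
  refine Finset.prod_congr rfl fun i _ => ?_
  rw [fourier_coe_apply]
  simp

/-- The Fourier coefficients of the periodization are values of the Fourier transform of `F`. The
transform is taken on `EuclideanSpace`, as it needs an inner product. -/
theorem mFourierCoeff_periodization {k : ℕ} (F : SchwartzMap (Fin k → ℝ) ℂ)
    (hF : ∀ x i, 1 / 4 < |x i| → F x = 0) (n : Fin k → ℤ) :
    UnitAddTorus.mFourierCoeff (periodization F hF) n =
      𝓕 (SchwartzMap.compCLMOfContinuousLinearEquiv ℂ (EuclideanSpace.equiv (Fin k) ℝ) F)
        (WithLp.toLp 2 fun i => (n i : ℝ)) := by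
  rw [UnitAddTorus.mFourierCoeff_eq_integral _ _ fun _ => -1 / 2, SchwartzMap.fourier_coe,
    Real.fourier_eq', ← (PiLp.volume_preserving_toLp (Fin k)).integral_comp
    (MeasurableEquiv.toLp 2 _).measurableEmbedding]
  have hm : MeasurableSet {x : Fin k → ℝ | ∀ i, x i ∈ Set.Ioc (-1 / 2 : ℝ) (-1 / 2 + 1)} :=
    MeasurableSet.univ_pi' fun i => measurableSet_Ioc
  rw [← integral_indicator hm]
  congr 1
  ext x
  have hexp : UnitAddTorus.mFourier (-n) (fun i => (x i : UnitAddCircle)) =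
      Complex.exp (↑(-2 * Real.pi * inner ℝ (WithLp.toLp 2 x)
        (WithLp.toLp 2 fun i => (n i : ℝ))) * Complex.I) := by
    rw [mFourier_coe, ← Complex.exp_sum]
    congr 1
    simp only [PiLp.inner_apply, RCLike.inner_apply, conj_trivial]
    push_cast
    rw [Finset.mul_sum, Finset.sum_mul]
    refine Finset.sum_congr rfl fun i _ => ?_
    simp
    ring
  by_cases hx : ∀ i, x i ∈ Set.Ioc (-1 / 2 : ℝ) (-1 / 2 + 1)
  · rw [Set.indicator_of_mem (by exact hx), periodization_coe F hF x hx, hexp]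
    rfl
  · rw [Set.indicator_of_notMem (by exact hx)]
    push Not at hx
    obtain ⟨i, hi⟩ := hx
    have : F x = 0 := by
      refine hF x i ?_
      by_contra! hle
      rw [abs_le] at hle
      exact hi ⟨by linarith, by linarith⟩
    change (0 : ℂ) = _ • F x
    rw [this, smul_zero]

/-- A Schwartz function supported in `[-1/4, 1/4]^k` equals, on the open cube `(-1/2, 1/2)^k`, a
Fourier series with rapidly decreasing coefficients. -/
theorem fourier_expansion {k : ℕ} (F : SchwartzMap (Fin k → ℝ) ℂ)
    (hF : ∀ x i, 1 / 4 < |x i| → F x = 0) :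
    ∃ c : (Fin k → ℤ) → ℂ,
      (∀ N : ℕ, Summable fun n => ‖c n‖ * (1 + ‖fun i => (n i : ℝ)‖) ^ N) ∧
      ∀ x : Fin k → ℝ, (∀ i, |x i| < 1 / 2) →
        HasSum (fun n => c n * ∏ i, Complex.exp (2 * Real.pi * Complex.I * n i * x i)) (F x) := by
  set G := 𝓕 (SchwartzMap.compCLMOfContinuousLinearEquiv ℂ (EuclideanSpace.equiv (Fin k) ℝ) F)
    with hG
  have hc := mFourierCoeff_periodization F hF
  set c := UnitAddTorus.mFourierCoeff (periodization F hF) with hcdef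
  have hsum : ∀ N : ℕ, Summable fun n => ‖c n‖ * (1 + ‖fun i => (n i : ℝ)‖) ^ N := by
    intro N
    obtain ⟨M, hM⟩ := summable_lattice k
    set C := 2 ^ (N + M) * ((Finset.Iic (N + M, 0)).sup
      fun m => SchwartzMap.seminorm ℂ m.1 m.2) G with hC
    refine Summable.of_nonneg_of_le (fun n => by positivity) (fun n => ?_) (hM.mul_left C)
    rw [← div_eq_mul_inv, le_div_iff₀ (by positivity), mul_assoc, ← pow_add, mul_comm, hc n]
    have h1 := SchwartzMap.one_add_le_sup_seminorm_apply (𝕜 := ℂ) (m := (N + M, 0)) (k := N + M)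
      (n := 0) le_rfl le_rfl G (WithLp.toLp 2 fun i => (n i : ℝ))
    rw [norm_iteratedFDeriv_zero] at h1
    refine le_trans ?_ h1
    gcongr
    refine (pi_norm_le_iff_of_nonneg (norm_nonneg _)).2 fun i => ?_
    exact PiLp.norm_apply_le (WithLp.toLp 2 fun i => (n i : ℝ)) i
  refine ⟨c, hsum, fun x hx => ?_⟩
  have h0 : Summable c := by
    have := hsum 0
    simp only [pow_zero, mul_one] at this
    exact this.of_norm
  have := UnitAddTorus.hasSum_mFourier_series_apply_of_summable h0
    (fun i => (x i : UnitAddCircle))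
  rw [periodization_coe F hF x fun i => by
    have := abs_lt.1 (hx i)
    exact ⟨by linarith, by linarith⟩] at this
  simpa only [mFourier_coe, smul_eq_mul] using this

/-! ### Derivative bounds -/

/-- The Leibniz rule, packaged to bound the Schwartz seminorms of `g * h` by those of `h` at a
point where the derivatives of `g` up to order `l` are at most `B`. -/
theorem leibniz_bound {k : ℕ} {g : (Fin k → ℝ) → ℂ} (hg : ContDiff ℝ ∞ g)
    (h : SchwartzMap (Fin k → ℝ) ℂ) (p l : ℕ) {B : ℝ} (x : Fin k → ℝ)
    (hB : ∀ j ≤ l, ‖iteratedFDeriv ℝ j g x‖ ≤ B) :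
    ‖x‖ ^ p * ‖iteratedFDeriv ℝ l (fun y => g y * h y) x‖ ≤
      B * ∑ j ∈ Finset.range (l + 1), (l.choose j : ℝ) * SchwartzMap.seminorm ℂ p (l - j) h := by
  have h1 := norm_iteratedFDeriv_mul_le (𝕜 := ℝ) (N := ∞) hg (h.smooth ⊤) x (n := l)
    (by exact_mod_cast le_top)
  calc ‖x‖ ^ p * ‖iteratedFDeriv ℝ l (fun y => g y * h y) x‖
      ≤ ‖x‖ ^ p * ∑ j ∈ Finset.range (l + 1), (l.choose j : ℝ) *
          ‖iteratedFDeriv ℝ j g x‖ * ‖iteratedFDeriv ℝ (l - j) h x‖ := by gcongr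
    _ = ∑ j ∈ Finset.range (l + 1), ‖iteratedFDeriv ℝ j g x‖ * ((l.choose j : ℝ) *
          (‖x‖ ^ p * ‖iteratedFDeriv ℝ (l - j) h x‖)) := by
        rw [Finset.mul_sum]
        exact Finset.sum_congr rfl fun j _ => by ring
    _ ≤ ∑ j ∈ Finset.range (l + 1), B * ((l.choose j : ℝ) *
          SchwartzMap.seminorm ℂ p (l - j) h) := by
        refine Finset.sum_le_sum fun j hj => ?_
        have hj' := hB j (Nat.lt_succ_iff.1 (Finset.mem_range.1 hj))
        have hx := SchwartzMap.le_seminorm ℂ p (l - j) h x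
        have hB0 : 0 ≤ B := (norm_nonneg _).trans hj'
        gcongr
    _ = _ := by rw [Finset.mul_sum]

theorem norm_iteratedFDeriv_comp_clm_le {E F : Type*} [NormedAddCommGroup E] [NormedSpace ℝ E]
    [NormedAddCommGroup F] [NormedSpace ℝ F] {g : F → ℂ} (hg : ContDiff ℝ ∞ g)
    (L : E →L[ℝ] F) (j : ℕ) (x : E) :
    ‖iteratedFDeriv ℝ j (g ∘ L) x‖ ≤ ‖iteratedFDeriv ℝ j g (L x)‖ * ‖L‖ ^ j := by
  rw [L.iteratedFDeriv_comp_right hg x (by exact_mod_cast le_top)]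
  refine (ContinuousMultilinearMap.norm_compContinuousLinearMap_le _ _).trans ?_
  simp

theorem iteratedDeriv_cexp_I (j : ℕ) :
    iteratedDeriv j (fun t : ℝ => Complex.exp (Complex.I * t)) =
      fun t : ℝ => Complex.I ^ j * Complex.exp (Complex.I * t) := by
  induction j with
  | zero => simp
  | succ j ih =>
    rw [iteratedDeriv_succ, ih]
    ext t
    have h : HasDerivAt (fun t : ℝ => Complex.exp (Complex.I * t))
        (Complex.exp (Complex.I * t) * (Complex.I * 1)) t :=
      ((Complex.ofRealCLM.hasDerivAt (x := t)).const_mul Complex.I).cexp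
    rw [(h.const_mul _).deriv]
    ring

/-- The linear form `x ↦ 2π ∑ nᵢ xᵢ`. -/
noncomputable def phase {k : ℕ} (n : Fin k → ℤ) : (Fin k → ℝ) →L[ℝ] ℝ :=
  ∑ i, (2 * Real.pi * n i : ℝ) • ContinuousLinearMap.proj (R := ℝ) (φ := fun _ : Fin k => ℝ) i

theorem phase_apply {k : ℕ} (n : Fin k → ℤ) (x : Fin k → ℝ) :
    phase n x = ∑ i, 2 * Real.pi * n i * x i := by
  simp [phase]

theorem norm_phase_le {k : ℕ} (n : Fin k → ℤ) :
    ‖phase n‖ ≤ (1 + 2 * Real.pi * k) * (1 + ‖fun i => (n i : ℝ)‖) := by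
  have h : ‖phase n‖ ≤ 2 * Real.pi * k * ‖fun i => (n i : ℝ)‖ := by
    refine ContinuousLinearMap.opNorm_le_bound _ (by positivity) fun x => ?_
    rw [phase_apply]
    refine (norm_sum_le _ _).trans ?_
    calc ∑ i, ‖2 * Real.pi * n i * x i‖
        ≤ ∑ _i : Fin k, 2 * Real.pi * ‖fun i => (n i : ℝ)‖ * ‖x‖ := by
          refine Finset.sum_le_sum fun i _ => ?_
          rw [norm_mul, norm_mul, Real.norm_of_nonneg (by positivity : 0 ≤ 2 * Real.pi)]
          gcongr
          · exact norm_le_pi_norm (fun i => (n i : ℝ)) i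
          · exact norm_le_pi_norm x i
      _ = _ := by simp; ring
  have : 0 ≤ ‖fun i => (n i : ℝ)‖ := norm_nonneg _
  have : 0 ≤ 2 * Real.pi * k := by positivity
  nlinarith

/-- The derivatives of order at most `l` of the character `x ↦ exp (2πi n·x)` grow at most like
`‖n‖ ^ l`. -/
theorem norm_iteratedFDeriv_character_le {k : ℕ} (n : Fin k → ℤ) {j l : ℕ} (hj : j ≤ l)
    (x : Fin k → ℝ) :
    ‖iteratedFDeriv ℝ j (fun y => Complex.exp (Complex.I * phase n y)) x‖ ≤
      ((1 + 2 * Real.pi * k) * (1 + ‖fun i => (n i : ℝ)‖)) ^ l := by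
  have hg : ContDiff ℝ ∞ fun t : ℝ => Complex.exp (Complex.I * t) :=
    (contDiff_const.mul Complex.ofRealCLM.contDiff).cexp
  have h1 := norm_iteratedFDeriv_comp_clm_le hg (phase n) j x
  rw [norm_iteratedFDeriv_eq_norm_iteratedDeriv, iteratedDeriv_cexp_I] at h1
  have h2 : ‖Complex.I ^ j * Complex.exp (Complex.I * (phase n x : ℝ))‖ = 1 := by
    rw [norm_mul, norm_pow, Complex.norm_I, one_pow, one_mul, mul_comm,
      Complex.norm_exp_ofReal_mul_I]
  rw [h2, one_mul] at h1
  have h3 : 1 ≤ (1 + 2 * Real.pi * k) * (1 + ‖fun i => (n i : ℝ)‖) := by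
    apply one_le_mul_of_one_le_of_one_le
    · have : 0 ≤ 2 * Real.pi * k := by positivity
      linarith
    · linarith [norm_nonneg fun i => (n i : ℝ)]
  exact h1.trans ((pow_le_pow_left₀ (norm_nonneg _) (norm_phase_le n) j).trans
    (pow_le_pow_right₀ h3 hj))

/-! ### Density of pure tensors -/

/-- The closed linear span of the pure tensors with compactly supported factors. -/
noncomputable def tensorClosure (k : ℕ) : Submodule ℂ (SchwartzMap (Fin k → ℝ) ℂ) :=
  (Submodule.span ℂ {F | ∃ f : Fin k → SchwartzMap ℝ ℂ,
    (∀ m, HasCompactSupport (f m)) ∧ IsTensor f F}).topologicalClosure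

theorem isClosed_tensorClosure (k : ℕ) :
    IsClosed (tensorClosure k : Set (SchwartzMap (Fin k → ℝ) ℂ)) :=
  Submodule.isClosed_topologicalClosure _

theorem tensor_mem {k : ℕ} {f : Fin k → SchwartzMap ℝ ℂ} {F : SchwartzMap (Fin k → ℝ) ℂ}
    (hf : ∀ m, HasCompactSupport (f m)) (hF : IsTensor f F) : F ∈ tensorClosure k :=
  Submodule.le_topologicalClosure _ (Submodule.subset_span ⟨f, hf, hF⟩)

theorem tensorClosure_le {k : ℕ} {S : Submodule ℂ (SchwartzMap (Fin k → ℝ) ℂ)}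
    (hS : IsClosed (S : Set (SchwartzMap (Fin k → ℝ) ℂ)))
    (h : ∀ (f : Fin k → SchwartzMap ℝ ℂ) F, (∀ m, HasCompactSupport (f m)) → IsTensor f F → F ∈ S) :
    tensorClosure k ≤ S :=
  Submodule.topologicalClosure_minimal _
    (Submodule.span_le.2 fun F ⟨f, hf, hF⟩ => h f F hf hF) hS

/-- The Fourier series of `F`, multiplied by a tensor cutoff that is `1` on the support of `F` and
vanishes outside the open cube `(-1/2, 1/2)^k`, is a series of tensors converging to `F` in `𝓢`. -/
theorem mem_of_support_cube {k : ℕ} (F : SchwartzMap (Fin k → ℝ) ℂ)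
    (hF : ∀ x i, 1 / 4 < |x i| → F x = 0) : F ∈ tensorClosure k := by
  obtain ⟨c, hc, hsum⟩ := fourier_expansion F hF
  let χ : ContDiffBump (0 : ℝ) := ⟨1 / 4, 1 / 2, by norm_num, by norm_num⟩
  have hχs : HasCompactSupport fun t : ℝ => (χ t : ℂ) :=
    χ.hasCompactSupport.comp_left Complex.ofReal_zero
  let t : ℤ → SchwartzMap ℝ ℂ := fun m =>
    (hχs.mul_left (f := fun t : ℝ => Complex.exp (2 * Real.pi * Complex.I * m * t))).toSchwartzMap
      (((contDiff_const.mul Complex.ofRealCLM.contDiff).cexp).mul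
        (Complex.ofRealCLM.contDiff.comp χ.contDiff))
  have ht : ∀ m s, t m s = Complex.exp (2 * Real.pi * Complex.I * m * s) * χ s := fun _ _ => rfl
  have htc : ∀ m, HasCompactSupport (t m) := fun m => hχs.mul_left
  choose U hU using fun n : Fin k → ℤ => exists_tensor (fun i => t (n i)) fun i => htc (n i)
  -- `U n` is the character of frequency `n` times the cutoff `U 0`.
  have hU' : ∀ n x, U n x = Complex.exp (Complex.I * phase n x) * U 0 x := by
    intro n x
    rw [hU n x, hU 0 x, phase_apply]
    simp only [ht, Finset.prod_mul_distrib, ← Complex.exp_sum]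
    simp only [Pi.zero_apply, Int.cast_zero, mul_zero, zero_mul, Finset.sum_const_zero,
      Complex.exp_zero, one_mul]
    congr 2
    push_cast
    rw [Finset.mul_sum]
    exact Finset.sum_congr rfl fun i _ => by ring
  have hmem : ∀ n, c n • U n ∈ tensorClosure k := fun n =>
    Submodule.smul_mem _ _ (tensor_mem (fun i => htc (n i)) (hU n))
  have hS : HasSum (fun n => c n • U n) F := by
    refine hasSum_schwartz _ _ (fun p l => ?_) fun x => ?_
    · set K := (1 + 2 * Real.pi * k) ^ l * ∑ j ∈ Finset.range (l + 1),
        (l.choose j : ℝ) * SchwartzMap.seminorm ℂ p (l - j) (U 0) with hK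
      refine Summable.of_nonneg_of_le (fun n => apply_nonneg _ _) (fun n => ?_)
        ((hc l).mul_right K)
      rw [map_smul_eq_mul, mul_assoc]
      gcongr
      have hK0 : 0 ≤ K := by positivity
      refine SchwartzMap.seminorm_le_bound ℂ p l _ (by positivity) fun x => ?_
      have hfun : (U n : (Fin k → ℝ) → ℂ) =
          fun y => Complex.exp (Complex.I * phase n y) * U 0 y := funext (hU' n)
      rw [hfun]
      refine (leibniz_bound ?_ (U 0) p l x fun j hj =>
        norm_iteratedFDeriv_character_le n hj x).trans (le_of_eq ?_)
      · exact (contDiff_const.mul (Complex.ofRealCLM.contDiff.comp (phase n).contDiff)).cexp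
      · rw [hK, mul_pow]; ring
    · refine (HasSum.tsum_eq ?_).symm
      by_cases hx : ∀ i, |x i| < 1 / 2
      · have h1 := (hsum x hx).mul_right (∏ i, (χ (x i) : ℂ))
        have h2 : F x * ∏ i, (χ (x i) : ℂ) = F x := by
          by_cases hx' : ∀ i, |x i| ≤ 1 / 4
          · rw [Finset.prod_eq_one, mul_one]
            intro i _
            rw [χ.one_of_mem_closedBall, Complex.ofReal_one]
            simpa [χ] using hx' i
          · push Not at hx'
            obtain ⟨i, hi⟩ := hx'
            rw [hF x i hi, zero_mul]
        rw [h2] at h1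
        have h3 : (fun n => (c n • U n) x) = fun n => c n * (∏ i,
            Complex.exp (2 * Real.pi * Complex.I * n i * x i)) * ∏ i, (χ (x i) : ℂ) := by
          ext n
          simp only [smul_apply, smul_eq_mul, hU n x, ht, Finset.prod_mul_distrib]
          ring
        rw [h3]
        exact h1
      · push Not at hx
        obtain ⟨i, hi⟩ := hx
        rw [hF x i (by linarith)]
        convert hasSum_zero with n
        have : U n x = 0 := by
          rw [hU n x]
          refine Finset.prod_eq_zero (Finset.mem_univ i) ?_
          rw [ht, χ.zero_of_le_dist (by simpa [χ] using hi)]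
          simp
        simp [this]
  exact (isClosed_tensorClosure k).mem_of_tendsto hS
    (Eventually.of_forall fun s => Submodule.sum_mem _ fun n _ => hmem n)

/-- The dilation `F ↦ F (a • ·)` on Schwartz functions. -/
noncomputable def dilation (E : Type*) [NormedAddCommGroup E] [NormedSpace ℝ E] (a : ℝˣ) :
    SchwartzMap E ℂ →L[ℂ] SchwartzMap E ℂ :=
  SchwartzMap.compCLMOfContinuousLinearEquiv ℂ (ContinuousLinearEquiv.smulLeft a)

theorem dilation_apply {E : Type*} [NormedAddCommGroup E] [NormedSpace ℝ E] (a : ℝˣ)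
    (F : SchwartzMap E ℂ) (x : E) : dilation E a F x = F ((a : ℝ) • x) := rfl

theorem dilation_mem {k : ℕ} (a : ℝˣ) {F : SchwartzMap (Fin k → ℝ) ℂ}
    (hF : F ∈ tensorClosure k) : dilation _ a F ∈ tensorClosure k := by
  refine tensorClosure_le (S := (tensorClosure k).comap (dilation (Fin k → ℝ) a).toLinearMap)
    ((isClosed_tensorClosure k).preimage (dilation (Fin k → ℝ) a).continuous)
    (fun f G hf hG => ?_) hF
  refine tensor_mem (f := fun m => dilation ℝ a (f m)) (fun m => ?_) fun x => ?_
  · exact (hf m).comp_homeomorph (ContinuousLinearEquiv.smulLeft (R₁ := ℝ) (M₁ := ℝ) a).toHomeomorph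
  · exact hG ((a : ℝ) • x)

/-- Pure tensors with compactly supported factors span a dense subspace of `𝓢(ℝ^k)`. -/
theorem tensorClosure_eq_top (k : ℕ) : tensorClosure k = ⊤ := by
  rw [eq_top_iff]
  intro f _
  let χ : ContDiffBump (0 : ℝ) := ⟨1 / 8, 1 / 4, by norm_num, by norm_num⟩
  have hχs : HasCompactSupport fun t : ℝ => (χ t : ℂ) :=
    χ.hasCompactSupport.comp_left Complex.ofReal_zero
  obtain ⟨X, hX⟩ := exists_tensor (n := k) (fun _ => hχs.toSchwartzMap
      (Complex.ofRealCLM.contDiff.comp χ.contDiff)) fun _ => hχs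
  replace hX : ∀ x, X x = ∏ i, (χ (x i) : ℂ) := hX
  let R : ℕ → ℝˣ := fun N => Units.mk0 ((N : ℝ) + 1) (by positivity)
  let fR : ℕ → SchwartzMap (Fin k → ℝ) ℂ := fun N =>
    dilation _ (R N)⁻¹ (SchwartzMap.smulLeftCLM ℂ X (dilation _ (R N) f))
  have hfR : ∀ N x, fR N x = X (((N : ℝ) + 1)⁻¹ • x) * f x := by
    intro N x
    have hR : ((R N)⁻¹ : ℝˣ) = (((N : ℝ) + 1)⁻¹ : ℝ) := by simp [R]
    have hR' : (R N : ℝ) = (N : ℝ) + 1 := rfl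
    simp only [fR, dilation_apply, SchwartzMap.smulLeftCLM_apply_apply X.hasTemperateGrowth,
      smul_eq_mul, hR, hR']
    rw [smul_inv_smul₀ (by positivity)]
  have hmem : ∀ N, fR N ∈ tensorClosure k := by
    intro N
    refine dilation_mem _ (mem_of_support_cube _ fun x i hi => ?_)
    rw [SchwartzMap.smulLeftCLM_apply_apply X.hasTemperateGrowth, hX,
      Finset.prod_eq_zero (Finset.mem_univ i), zero_smul]
    rw [χ.zero_of_le_dist (by simpa [χ] using hi.le), Complex.ofReal_zero]
  have hbound : ∀ p l : ℕ, ∃ C : ℝ, 0 ≤ C ∧ ∀ N,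
      SchwartzMap.seminorm ℂ p l (fR N - f) ≤ C * (1 / ((N : ℝ) + 1)) := by
    intro p l
    set B := (∑ j ∈ Finset.range (l + 1), SchwartzMap.seminorm ℂ 0 j X) + 1 with hB
    set D := ∑ j ∈ Finset.range (l + 1),
      (l.choose j : ℝ) * SchwartzMap.seminorm ℂ (p + 1) (l - j) f with hD
    have hB0 : 0 ≤ B := by positivity
    have hD0 : 0 ≤ D := by positivity
    refine ⟨8 * (B * D), by positivity, fun N => ?_⟩
    refine SchwartzMap.seminorm_le_bound ℂ p l _ (by positivity) fun x => ?_
    let L : (Fin k → ℝ) →L[ℝ] (Fin k → ℝ) := ((N : ℝ) + 1)⁻¹ • ContinuousLinearMap.id ℝ _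
    have hLx : ∀ y, L y = ((N : ℝ) + 1)⁻¹ • y := fun y => rfl
    have hL : ‖L‖ ≤ 1 := by
      refine ContinuousLinearMap.opNorm_le_bound _ zero_le_one fun y => ?_
      rw [hLx, norm_smul, norm_inv, Real.norm_of_nonneg (by positivity)]
      gcongr
      exact inv_le_one_of_one_le₀ (by linarith [(Nat.cast_nonneg N : (0 : ℝ) ≤ N)])
    have hfun : (⇑(fR N - f) : (Fin k → ℝ) → ℂ) = fun y => ((X ∘ L) y - 1) * f y := by
      ext y
      simp only [sub_apply, hfR, Function.comp, hLx]
      ring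
    by_cases hx : ‖x‖ < ((N : ℝ) + 1) / 8
    · -- Near `x` the cutoff is identically `1`.
      have hz : (⇑(fR N - f) : (Fin k → ℝ) → ℂ) =ᶠ[𝓝 x] fun _ => 0 := by
        filter_upwards [(continuous_norm.tendsto x).eventually (gt_mem_nhds hx)] with y hy
        have : X (L y) = 1 := by
          rw [hX]
          refine Finset.prod_eq_one fun i _ => ?_
          rw [χ.one_of_mem_closedBall, Complex.ofReal_one]
          have h1 : ‖y i‖ < ((N : ℝ) + 1) / 8 := (norm_le_pi_norm y i).trans_lt hy
          rw [mem_closedBall_zero_iff, hLx, Pi.smul_apply, norm_smul, norm_inv,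
            Real.norm_of_nonneg (by positivity : 0 ≤ (N : ℝ) + 1),
            inv_mul_le_iff₀ (by positivity)]
          change _ ≤ _ * (1 / 8 : ℝ)
          linarith
        rw [hfun]
        simp [this]
      rw [(hz.iteratedFDeriv ℝ l).eq_of_nhds]
      rw [iteratedFDeriv_fun_zero]
      simp
      positivity
    · -- Here `‖x‖ ≥ R / 8` with `R = N + 1`, so one extra power of `‖x‖` yields the factor `8 / R`.
      push Not at hx
      have hsm : ContDiff ℝ ∞ (X ∘ L) := (X.smooth ⊤).comp L.contDiff
      have hder : ∀ j ≤ l, ‖iteratedFDeriv ℝ j (fun y => (X ∘ L) y - 1) x‖ ≤ B := by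
        intro j hj
        change ‖iteratedFDeriv ℝ j ((X ∘ L) - fun _ => (1 : ℂ)) x‖ ≤ B
        rw [iteratedFDeriv_sub_apply (hsm.of_le (by exact_mod_cast le_top)).contDiffAt
          contDiffAt_const]
        refine (norm_sub_le _ _).trans (add_le_add ?_ ?_)
        · have h1 := norm_iteratedFDeriv_comp_clm_le (X.smooth ⊤) L j x
          have h2 := SchwartzMap.norm_iteratedFDeriv_le_seminorm ℂ X j (L x)
          have h3 : ‖L‖ ^ j ≤ 1 := pow_le_one₀ (norm_nonneg _) hL
          refine (h1.trans (mul_le_of_le_one_right (norm_nonneg _) h3)).trans (h2.trans ?_)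
          exact Finset.single_le_sum (f := fun j => SchwartzMap.seminorm ℂ 0 j X)
            (fun j _ => apply_nonneg _ _) (Finset.mem_range.2 (Nat.lt_succ_of_le hj))
        · rcases Nat.eq_zero_or_pos j with rfl | hj0
          · simp
          · rw [iteratedFDeriv_const_of_ne hj0.ne']
            simp
      have key := leibniz_bound (hsm.sub contDiff_const) f (p + 1) l x hder
      rw [hfun]
      set Q := ‖iteratedFDeriv ℝ l (fun y => ((X ∘ L) y - 1) * f y) x‖
      have hN : (0 : ℝ) < (N : ℝ) + 1 := by positivity
      rw [mul_one_div, le_div_iff₀ hN]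
      have : 0 ≤ ‖x‖ ^ p * Q := by positivity
      calc ‖x‖ ^ p * Q * ((N : ℝ) + 1) ≤ ‖x‖ ^ p * Q * (8 * ‖x‖) := by
            gcongr; linarith
        _ = 8 * (‖x‖ ^ (p + 1) * Q) := by ring
        _ ≤ 8 * (B * D) := by gcongr
  have hlim : Tendsto fR atTop (𝓝 f) := by
    rw [(schwartz_withSeminorms ℂ (Fin k → ℝ) ℂ).tendsto_nhds]
    rintro ⟨p, l⟩ ε hε
    obtain ⟨C, _, hC⟩ := hbound p l
    have h0 := (tendsto_one_div_add_atTop_nhds_zero_nat (𝕜 := ℝ)).const_mul C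
    rw [mul_zero] at h0
    filter_upwards [(tendsto_order.1 h0).2 ε hε] with N hN
    exact (hC N).trans_lt hN
  exact (isClosed_tensorClosure k).mem_of_tendsto hlim (Eventually.of_forall hmem)

/-! ### Adjointness of the extension -/

/-- Pointwise complex conjugation on Schwartz space. -/
noncomputable def conjS (E : Type*) [NormedAddCommGroup E] [NormedSpace ℝ E] :
    SchwartzMap E ℂ →L[ℝ] SchwartzMap E ℂ :=
  SchwartzMap.postcompCLM (Complex.conjCLE : ℂ →L[ℝ] ℂ)

theorem conjS_apply {E : Type*} [NormedAddCommGroup E] [NormedSpace ℝ E] (f : SchwartzMap E ℂ)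
    (x : E) : conjS E f x = (starRingEnd ℂ) (f x) := rfl

theorem conjS_smul {E : Type*} [NormedAddCommGroup E] [NormedSpace ℝ E] (c : ℂ)
    (f : SchwartzMap E ℂ) : conjS E (c • f) = (starRingEnd ℂ) c • conjS E f := by
  ext x
  simp [conjS_apply]

theorem IsConjOf.eq_conjS {n : ℕ} {f fc : SchwartzMap (Fin n → ℝ) ℂ} (h : IsConjOf f fc) :
    fc = conjS _ f := by
  ext x
  exact h x

theorem isConjOf_conjS {n : ℕ} (f : SchwartzMap (Fin n → ℝ) ℂ) : IsConjOf f (conjS _ f) :=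
  fun _ => rfl

theorem IsTensor.conjS {n : ℕ} {f : Fin n → SchwartzMap ℝ ℂ} {F : SchwartzMap (Fin n → ℝ) ℂ}
    (h : IsTensor f F) : IsTensor (fun m => conjS ℝ (f m)) (conjS _ F) := by
  intro x
  simp only [conjS_apply, h x, map_prod]

/-- The adjointness relation on pure tensors; `σ = 1` and `σ = -1` are the self-adjoint and the
skew-adjoint case. -/
theorem extension_adjoint_tensor {i k : ℕ} {A : DVO i} {ℓ : Fin i → Fin k} {E : DVO k}
    (hE : IsExtension i k A ℓ E) (σ : ℂ)
    (hA : ∀ f g, A g (conjS _ f) = σ * (starRingEnd ℂ) (A f (conjS _ g)))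
    {f g : Fin k → SchwartzMap ℝ ℂ} {F G : SchwartzMap (Fin k → ℝ) ℂ}
    (hf : ∀ m, HasCompactSupport (f m)) (hg : ∀ m, HasCompactSupport (g m))
    (hF : IsTensor f F) (hG : IsTensor g G) :
    E G (conjS _ F) = σ * (starRingEnd ℂ) (E F (conjS _ G)) := by
  obtain ⟨F', hF'⟩ := exists_tensor (fun a => f (ℓ a)) fun a => hf (ℓ a)
  obtain ⟨G', hG'⟩ := exists_tensor (fun a => g (ℓ a)) fun a => hg (ℓ a)
  rw [hE g _ G _ G' _ hG hF.conjS hG' hF'.conjS, hE f _ F _ F' _ hF hG.conjS hF' hG'.conjS, hA,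
    map_mul, map_prod, mul_assoc]
  congr 2
  refine Finset.prod_congr rfl fun m _ => ?_
  rw [← integral_conj]
  congr 1
  ext x
  simp only [conjS_apply, map_mul, Complex.conj_conj]
  ring

/-- The adjointness relation extends from pure tensors to all Schwartz functions, first in `F` for
a tensor `G` and then in `G`. -/
theorem extension_adjoint {i k : ℕ} {A : DVO i} {ℓ : Fin i → Fin k} {E : DVO k}
    (hE : IsExtension i k A ℓ E) (σ : ℂ)
    (hA : ∀ f g, A g (conjS _ f) = σ * (starRingEnd ℂ) (A f (conjS _ g)))
    (F G : SchwartzMap (Fin k → ℝ) ℂ) :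
    E G (conjS _ F) = σ * (starRingEnd ℂ) (E F (conjS _ G)) := by
  have hev : ∀ H, Continuous fun F => E F H := fun H => E.continuous.eval_const H
  have step : ∀ (g : Fin k → SchwartzMap ℝ ℂ) (G : SchwartzMap (Fin k → ℝ) ℂ),
      (∀ m, HasCompactSupport (g m)) → IsTensor g G → ∀ F : SchwartzMap (Fin k → ℝ) ℂ,
      E G (conjS _ F) = σ * (starRingEnd ℂ) (E F (conjS _ G)) := by
    intro g G hg hG F
    let S : Submodule ℂ (SchwartzMap (Fin k → ℝ) ℂ) :=
      { carrier := {F | E G (conjS _ F) = σ * (starRingEnd ℂ) (E F (conjS _ G))}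
        zero_mem' := by simp
        add_mem' := fun {a b} ha hb => by
          simp only [Set.mem_ofPred_eq] at ha hb ⊢
          simp only [map_add, ha, hb, _root_.add_apply]
          ring
        smul_mem' := fun c a ha => by
          simp only [Set.mem_ofPred_eq] at ha ⊢
          simp only [conjS_smul, map_smul, ha, _root_.smul_apply, smul_eq_mul, map_mul]
          ring }
    have hS : IsClosed (S : Set (SchwartzMap (Fin k → ℝ) ℂ)) :=
      isClosed_eq ((E G).continuous.comp (conjS _).continuous)
        (continuous_const.mul (Complex.continuous_conj.comp (hev _)))
    have hle := tensorClosure_le hS fun f F hf hF =>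
      extension_adjoint_tensor hE σ hA hf hg hF hG
    rw [tensorClosure_eq_top] at hle
    exact hle (Submodule.mem_top (x := F))
  let S : Submodule ℂ (SchwartzMap (Fin k → ℝ) ℂ) :=
    { carrier := {G | E G (conjS _ F) = σ * (starRingEnd ℂ) (E F (conjS _ G))}
      zero_mem' := by simp
      add_mem' := fun {a b} ha hb => by
        simp only [Set.mem_ofPred_eq] at ha hb ⊢
        simp only [map_add, ha, hb, _root_.add_apply]
        ring
      smul_mem' := fun c a ha => by
        simp only [Set.mem_ofPred_eq] at ha ⊢
        simp only [conjS_smul, map_smul, ha, _root_.smul_apply, smul_eq_mul, map_mul,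
          Complex.conj_conj]
        ring }
  have hS : IsClosed (S : Set (SchwartzMap (Fin k → ℝ) ℂ)) :=
    isClosed_eq (hev _) (continuous_const.mul (Complex.continuous_conj.comp
      ((E F).continuous.comp (conjS _).continuous)))
  have hle := tensorClosure_le hS fun g G hg hG => step g G hg hG F
  rw [tensorClosure_eq_top] at hle
  exact hle (Submodule.mem_top (x := G))

/-- The `k`-particle extension of a skew-adjoint operator is skew-adjoint, and the `k`-particle
extension of a self-adjoint operator is self-adjoint. -/
theorem extension_skewAdjoint_selfAdjoint (i k : ℕ) (hi : 0 < i) (hik : i ≤ k)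
    (A : DVO i) (ℓ : Fin i → Fin k) (hℓ : Function.Injective ℓ)
    (E : DVO k) (hE : IsExtension i k A ℓ E) :
    (IsSkewAdjointDVO A → IsSkewAdjointDVO E) ∧
    (IsSelfAdjointDVO A → IsSelfAdjointDVO E) := by
  constructor
  · intro hA f g fc gc hf hg
    rw [hf.eq_conjS, hg.eq_conjS, ← neg_one_mul]
    refine extension_adjoint hE (-1) (fun f g => ?_) f g
    rw [neg_one_mul]
    exact hA f g _ _ (isConjOf_conjS f) (isConjOf_conjS g)
  · intro hA f g fc gc hf hg
    rw [hf.eq_conjS, hg.eq_conjS, ← one_mul ((starRingEnd ℂ) _)]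
    refine extension_adjoint hE 1 (fun f g => ?_) f g
    rw [one_mul]
    exact hA f g _ _ (isConjOf_conjS f) (isConjOf_conjS g)
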